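/- Suppose the frequency vector ω⃗ satisfies the Strong Diophantine Condition with constants B₀ ∈ (0,1] and μ̂ > 0, and set μ := μ̂ + d + 1. Let ρ > 0, L ≥ 1, L̃ ≥ 1, and ξ ∈ ℝ^d with | ‖ξ‖² − ρ² | ≤ L; set s := Rank Υ^ℤ_{L,L̃}(ξ) and assume s ≤ d. Let V := span_ℝ(Υ^ℤ_{L,L̃}(ξ)) ⊆ ℝ^l and Γ^ℤ(ξ) := V ∩ ℤ^l. Then there exists a constant C = C(d,l,μ̂,B₀) such that: (i) the Euclidean diameter of {mω⃗ : m ∈ Γ^ℤ(ξ) ∩ ℛ(L,ξ)} in ℝ^d is at most C·L·L̃^{sμ}; (ii) the cardinality of Γ^ℤ(ξ) ∩ ℛ(L,ξ) is at most C·L^{s}·L̃^{(s²+1)μ}; and (iii) the diameter of Γ^ℤ(ξ) ∩ ℛ(L,ξ) in the ℓ^∞ norm |·| on ℤ^l is at most C·L·L̃^{(s+2)μ}. -/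

import Mathlib

open MeasureTheory Set Metric

noncomputable section

/-- `nω⃗ := ∑_j n_j ω_j ∈ ℝ^d`. -/
def intComb {d l : ℕ} (ω : Fin l → EuclideanSpace ℝ (Fin d)) (n : Fin l → ℤ) :
    EuclideanSpace ℝ (Fin d) :=
  ∑ j, (n j : ℝ) • ω j

/-- `|n| := max_j |n_j|`, as a real number. -/
def supAbs {l : ℕ} (n : Fin l → ℤ) : ℝ :=
  ((Finset.univ.sup fun j => (n j).natAbs : ℕ) : ℝ)

/-- An integer vector viewed as a vector of `ℝ^l`. -/
def intCast {l : ℕ} (m : Fin l → ℤ) : Fin l → ℝ := fun j => (m j : ℝ)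

def thetaDet {d l : ℕ} (ω : Fin l → EuclideanSpace ℝ (Fin d))
    (N : Matrix (Fin d) (Fin l) ℤ) : ℝ :=
  Matrix.det (Matrix.of fun i j : Fin d => ∑ k, (N j k : ℝ) * ω k i)

def starNorm {d l : ℕ} (N : Matrix (Fin d) (Fin l) ℤ) : ℝ :=
  ((∑ j, ∑ k, (N j k).natAbs : ℕ) : ℝ)

/-- The Strong Diophantine Condition with constants `B₀ > 0` and exponent `μhat`. -/
def SDC (d l : ℕ) (ω : Fin l → EuclideanSpace ℝ (Fin d)) (B₀ μhat : ℝ) : Prop :=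
  ∀ N : Matrix (Fin d) (Fin l) ℤ, (N.map fun z => (z : ℝ)).rank = d →
    B₀ * starNorm N ^ (-μhat) < |thetaDet ω N|

/-- The resonant set `ℛ(L,ξ) = {m ∈ ℤ^l : | ‖ξ + mω⃗‖² − ρ² | ≤ L}`. -/
def Res {d l : ℕ} (ω : Fin l → EuclideanSpace ℝ (Fin d)) (ρ L : ℝ)
    (ξ : EuclideanSpace ℝ (Fin d)) : Set (Fin l → ℤ) :=
  {m | |‖ξ + intComb ω m‖ ^ 2 - ρ ^ 2| ≤ L}

/-- `Υ^ℤ_{L,L̃}(ξ)`: integer vectors `(L,L̃)`-conjugate to `0` with respect to `ξ`. -/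
def Ups {d l : ℕ} (ω : Fin l → EuclideanSpace ℝ (Fin d)) (ρ L Ltilde : ℝ)
    (ξ : EuclideanSpace ℝ (Fin d)) : Set (Fin l → ℤ) :=
  {m' | ∃ (k : ℕ) (c : ℕ → (Fin l → ℤ)),
    c 0 = 0 ∧ c k = m' ∧
    (∀ i ≤ k, c i ∈ Res ω ρ L ξ) ∧
    (∀ i < k, supAbs (c (i + 1) - c i) < Ltilde)}

/-- `Γ^ℤ(ξ) := span_ℝ(Υ^ℤ_{L,L̃}(ξ)) ∩ ℤ^l`: the integer vectors lying in the real
span of `Υ^ℤ_{L,L̃}(ξ)`. -/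
def GammaZ {d l : ℕ} (ω : Fin l → EuclideanSpace ℝ (Fin d)) (ρ L Ltilde : ℝ)
    (ξ : EuclideanSpace ℝ (Fin d)) : Set (Fin l → ℤ) :=
  {m | intCast m ∈ Submodule.span ℝ (intCast '' Ups ω ρ L Ltilde ξ)}

/-!
A chain of coupled vectors that leaves a subspace `W` of `ℝ^l` does so by a step `u` of size at most
`L̃` between two resonant points, the first of which lies in `W`. Choosing such steps greedily gives
independent integer vectors `u₁, …, u_s` spanning `V`. Since a step joins two points of a thin
spherical shell, it bounds the component of `ξ` along the new direction by the projection of `ξ`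
onto the previous directions, at the cost of dividing by the length of the part of `u_i ω⃗`
orthogonal to them. After completing to `d` independent vectors by unit vectors, the product of
these lengths bounds the determinant of the `u_i ω⃗` from above, so all divisions together cost only
one application of the Strong Diophantine Condition: the projection of `ξ` onto `Vω⃗` has size
`O(L L̃^μ)`.

The points `mω⃗` with `m ∈ Γ^ℤ(ξ) ∩ ℛ(L,ξ)` lie near a sphere in `Vω⃗` about minus this projection,
whence (i). Cramer's rule, with one more division by the determinant, bounds the coordinates of such
`m` with respect to the `u_i`, whence (iii). An integer point of `V` is determined by `s` of its
coordinates, whence (ii).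
-/

section LinearAlgebra

variable {K M α : Type*} [DivisionRing K] [AddCommGroup M] [Module K M]

lemma finrank_span_image_Iio {v : ℕ → M} {n : ℕ} (hv : LinearIndepOn K v (Iio n)) :
    Module.finrank K (Submodule.span K (v '' Iio n)) = n := by
  rw [image_eq_range, finrank_span_eq_card hv]
  simp

lemma exists_linearIndepOn_Iio_of_forall_exists_notMem [Nonempty α] (f : α → M) {n : ℕ}
    {P : Submodule K M → α → Prop}
    (h : ∀ W : Submodule K M, Module.finrank K W < n → ∃ a, f a ∉ W ∧ P W a) :
    ∃ v : ℕ → α, LinearIndepOn K (f ∘ v) (Iio n) ∧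
      ∀ i < n, P (Submodule.span K (f ∘ v '' Iio i)) (v i) := by
  choose! a ha_notMem ha_prop using h
  let W : ℕ → Submodule K M := Nat.rec ⊥ fun _ W => Submodule.span K {f (a W)} ⊔ W
  let v : ℕ → α := fun i => a (W i)
  have Iio_succ (i : ℕ) : Iio (i + 1) = insert i (Iio i) := Order.Iio_succ_eq_insert i
  have span_eq (i : ℕ) : Submodule.span K (f ∘ v '' Iio i) = W i := by
    induction i with
    | zero => simp [W]
    | succ i ih => rw [Iio_succ, image_insert_eq, Submodule.span_insert, ih]; rfl
  have indep (i : ℕ) (hi : i ≤ n) : LinearIndepOn K (f ∘ v) (Iio i) := by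
    induction i with
    | zero => simp
    | succ i ih =>
      have hrank := finrank_span_image_Iio (ih (by omega))
      rw [span_eq] at hrank
      rw [Iio_succ, linearIndepOn_insert self_notMem_Iio, span_eq]
      exact ⟨ih (by omega), ha_notMem (W i) (by omega)⟩
  refine ⟨v, indep n le_rfl, fun i hi => ?_⟩
  have hrank := finrank_span_image_Iio (indep i hi.le)
  exact span_eq i ▸ ha_prop (W i) (by rw [← span_eq i]; omega)

lemma exists_pi_single_notMem_of_ne_top {R ι : Type*} [Semiring R] [Finite ι] [DecidableEq ι]
    {W : Submodule R (ι → R)} (hW : W ≠ ⊤) : ∃ k, Pi.single k 1 ∉ W := by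
  by_contra! hmem
  refine hW (eq_top_iff.mpr ?_)
  rw [← (Pi.basisFun R ι).span_eq, Submodule.span_le]
  rintro _ ⟨k, rfl⟩
  simpa using hmem k

lemma alternatingMap_update_sum_smul {R N ι : Type*} [CommRing R] [AddCommGroup N] [Module R N]
    [Module R M] [Fintype ι] [DecidableEq ι] (g : M [⋀^ι]→ₗ[R] N) (y : ι → M) (t : ι → R) (i : ι) :
    g (Function.update y i (∑ k, t k • y k)) = t i • g y := by
  rw [g.map_update_sum, Finset.sum_eq_single i]
  · rw [g.map_update_smul, Function.update_eq_self]
  · intro k _ hk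
    rw [g.map_update_smul, g.map_update_self y hk.symm, smul_zero]
  · simp

lemma exists_finset_forall_eq_zero_of_forall_mem {F ι : Type*} [Field F] [Finite ι]
    (V : Submodule F (ι → F)) :
    ∃ s : Finset ι, s.card ≤ Module.finrank F V ∧ ∀ x ∈ V, (∀ k ∈ s, x k = 0) → x = 0 := by
  have := Fintype.ofFinite ι
  let coord : ι → Module.Dual F V := fun k => (LinearMap.proj k).comp V.subtype
  obtain ⟨b, -, -, hspan, hindep⟩ :=
    exists_linearIndepOn_extension (linearIndepOn_empty F coord) (subset_univ ∅)
  have := Fintype.ofFinite b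
  refine ⟨b.toFinset, ?_, fun x hx hzero => funext fun k => ?_⟩
  · rw [toFinset_card, ← Subspace.dual_finrank_eq]
    exact hindep.fintype_card_le_finrank
  · have hle : Submodule.span F (coord '' b) ≤ LinearMap.ker (Module.Dual.eval F V ⟨x, hx⟩) := by
      rw [Submodule.span_le]
      rintro _ ⟨i, hi, rfl⟩
      exact hzero i (mem_toFinset.mpr hi)
    exact hle (hspan (mem_image_of_mem coord (mem_univ k)))

end LinearAlgebra

section IntegerVectors

variable {d l : ℕ}

lemma norm_intCast (n : Fin l → ℤ) : ‖intCast n‖ = supAbs n := by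
  refine le_antisymm ((pi_norm_le_iff_of_nonneg (Nat.cast_nonneg _)).mpr fun k => ?_) ?_
  · rw [intCast, Real.norm_eq_abs, ← Int.cast_abs, ← Nat.cast_natAbs, Nat.cast_le]
    exact Finset.le_sup (f := fun j => (n j).natAbs) (Finset.mem_univ k)
  · rw [supAbs, ← Nat.le_floor_iff (norm_nonneg _)]
    refine Finset.sup_le fun k _ => Nat.le_floor ?_
    simpa [intCast] using norm_le_pi_norm (intCast n) k

lemma abs_le_supAbs (n : Fin l → ℤ) (k : Fin l) : |(n k : ℝ)| ≤ supAbs n :=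
  norm_intCast n ▸ norm_le_pi_norm (intCast n) k

lemma intCast_zero : intCast (0 : Fin l → ℤ) = 0 :=
  funext fun _ => Int.cast_zero

lemma intCast_add (m n : Fin l → ℤ) : intCast (m + n) = intCast m + intCast n :=
  funext fun _ => Int.cast_add _ _

lemma intCast_sub (m n : Fin l → ℤ) : intCast (m - n) = intCast m - intCast n :=
  funext fun _ => Int.cast_sub _ _

lemma intCast_injective : Function.Injective (intCast : (Fin l → ℤ) → Fin l → ℝ) :=
  fun _ _ h => funext fun k => Int.cast_injective (congrFun h k)

lemma linearCombination_intCast (ω : Fin l → EuclideanSpace ℝ (Fin d)) (n : Fin l → ℤ) :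
    Fintype.linearCombination ℝ ω (intCast n) = intComb ω n := rfl

lemma intComb_add (ω : Fin l → EuclideanSpace ℝ (Fin d)) (m n : Fin l → ℤ) :
    intComb ω (m + n) = intComb ω m + intComb ω n := by
  simp only [← linearCombination_intCast, intCast_add, map_add]

lemma intComb_sub (ω : Fin l → EuclideanSpace ℝ (Fin d)) (m n : Fin l → ℤ) :
    intComb ω (m - n) = intComb ω m - intComb ω n := by
  simp only [← linearCombination_intCast, intCast_sub, map_sub]

lemma norm_intComb_le {ω : Fin l → EuclideanSpace ℝ (Fin d)} {r : ℝ} (hω : ∀ j, ‖ω j‖ ≤ r)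
    (n : Fin l → ℤ) : ‖intComb ω n‖ ≤ r * l * supAbs n :=
  calc ‖intComb ω n‖ ≤ ∑ j, ‖(n j : ℝ) • ω j‖ := norm_sum_le _ _
    _ ≤ ∑ _j : Fin l, supAbs n * r := by
        gcongr with j
        rw [norm_smul]
        exact mul_le_mul (abs_le_supAbs n j) (hω j) (norm_nonneg _) (Nat.cast_nonneg _)
    _ = r * l * supAbs n := by
        rw [Finset.sum_const, Finset.card_univ, Fintype.card_fin, nsmul_eq_mul]
        ring

lemma norm_le_of_forall_abs_le_one (x : EuclideanSpace ℝ (Fin d)) (hx : ∀ i, |x i| ≤ 1) :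
    ‖x‖ ≤ d := by
  rw [EuclideanSpace.norm_eq, Real.sqrt_le_left (Nat.cast_nonneg d)]
  calc ∑ i, ‖x i‖ ^ 2 ≤ ∑ _i : Fin d, (1 : ℝ) := by
        gcongr with i
        exact pow_le_one₀ (norm_nonneg _) (hx i)
    _ = (d : ℝ) := by simp
    _ ≤ (d : ℝ) ^ 2 := by exact_mod_cast Nat.le_self_pow two_ne_zero d

lemma card_piFinset_Icc_floor_le {ι : Type*} [Fintype ι] [DecidableEq ι] {M : ℝ} (hM : 0 ≤ M) :
    ((Fintype.piFinset fun _ : ι => Finset.Icc (-⌊M⌋) ⌊M⌋).card : ℝ) ≤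
      (2 * M + 1) ^ Fintype.card ι := by
  have hfloor : 0 ≤ ⌊M⌋ := Int.floor_nonneg.mpr hM
  have hcard : (((⌊M⌋ + 1 - -⌊M⌋).toNat : ℕ) : ℝ) = 2 * ⌊M⌋ + 1 := by
    rw [← Int.cast_natCast, Int.toNat_of_nonneg (by omega)]
    push_cast
    ring
  rw [Fintype.card_piFinset, Finset.prod_const, Finset.card_univ, Int.card_Icc, Nat.cast_pow, hcard]
  gcongr
  exact Int.floor_le M

lemma finite_and_ncard_le_of_supAbs_le {V : Submodule ℝ (Fin l → ℝ)} {T : Set (Fin l → ℤ)}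
    {M : ℝ} (hM : 0 ≤ M) (hTV : ∀ m ∈ T, intCast m ∈ V) (hTM : ∀ m ∈ T, supAbs m ≤ M) :
    T.Finite ∧ (T.ncard : ℝ) ≤ (2 * M + 1) ^ Module.finrank ℝ V := by
  obtain ⟨s, hs_card, hs_sep⟩ := exists_finset_forall_eq_zero_of_forall_mem V
  let box : Finset (s → ℤ) := Fintype.piFinset fun _ => Finset.Icc (-⌊M⌋) ⌊M⌋
  let restrict : (Fin l → ℤ) → s → ℤ := fun m k => m k
  have injOn : InjOn restrict T := by
    intro m hm m' hm' heq
    have hzero := hs_sep (intCast m - intCast m') (V.sub_mem (hTV m hm) (hTV m' hm'))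
      fun k hk => sub_eq_zero.mpr (congrArg Int.cast (congrFun heq ⟨k, hk⟩))
    exact intCast_injective (sub_eq_zero.mp hzero)
  have mapsTo : MapsTo restrict T box := by
    intro m hm
    refine Fintype.mem_piFinset.mpr fun k => Finset.mem_Icc.mpr (abs_le.mp (Int.le_floor.mpr ?_))
    rw [Int.cast_abs]
    exact (abs_le_supAbs m k).trans (hTM m hm)
  refine ⟨Finite.of_injOn mapsTo injOn box.finite_toSet, ?_⟩
  have hncard : T.ncard ≤ box.card :=
    ncard_coe_finset box ▸ ncard_le_ncard_of_injOn restrict mapsTo injOn box.finite_toSet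
  calc (T.ncard : ℝ) ≤ box.card := mod_cast hncard
    _ ≤ (2 * M + 1) ^ s.card := Fintype.card_coe s ▸ card_piFinset_Icc_floor_le hM
    _ ≤ (2 * M + 1) ^ Module.finrank ℝ V := pow_le_pow_right₀ (by linarith) hs_card

end IntegerVectors

section Shell

open Submodule

variable {E : Type*} [NormedAddCommGroup E]

/-- The spherical shell of vectors whose squared norm is within `L` of `ρ ^ 2`; the resonant set
`Res ω ρ L ξ` consists of the `m` with `ξ + intComb ω m` in this shell. -/
def shell (ρ L : ℝ) : Set E := {η | |‖η‖ ^ 2 - ρ ^ 2| ≤ L}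

variable {ρ L : ℝ}

lemma abs_sq_norm_sub_sq_norm_le_of_mem_shell {η ζ : E} (hη : η ∈ shell ρ L)
    (hζ : ζ ∈ shell ρ L) : |‖η‖ ^ 2 - ‖ζ‖ ^ 2| ≤ 2 * L :=
  calc |‖η‖ ^ 2 - ‖ζ‖ ^ 2| = |(‖η‖ ^ 2 - ρ ^ 2) - (‖ζ‖ ^ 2 - ρ ^ 2)| := by
        rw [sub_sub_sub_cancel_right]
    _ ≤ L + L := (abs_sub _ _).trans (add_le_add hη hζ)
    _ = 2 * L := by ring

variable [InnerProductSpace ℝ E]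

lemma abs_inner_le_of_add_mem_shell {η w : E} (hη : η ∈ shell ρ L) (hηw : η + w ∈ shell ρ L) :
    |inner ℝ η w| ≤ L + ‖w‖ ^ 2 / 2 := by
  have h := abs_sq_norm_sub_sq_norm_le_of_mem_shell hηw hη
  rw [norm_add_sq_real, abs_le] at h
  rw [abs_le]
  constructor <;> linarith [sq_nonneg ‖w‖]

variable (W : Submodule ℝ E) [W.HasOrthogonalProjection]

lemma sq_norm_starProjection_add_sub (ξ : E) {x : E} (hx : x ∈ W) :
    ‖W.starProjection ξ + x‖ ^ 2 - ‖W.starProjection ξ‖ ^ 2 = ‖ξ + x‖ ^ 2 - ‖ξ‖ ^ 2 := by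
  have hinner : inner ℝ (W.starProjection ξ) x = inner ℝ ξ x := by
    rw [inner_starProjection_left_eq_right, starProjection_eq_self_iff.mpr hx]
  rw [norm_add_sq_real, norm_add_sq_real, hinner]
  ring

lemma norm_starProjection_add_le_of_mem_shell (hL : 1 ≤ L) {ξ x : E} (hx : x ∈ W)
    (hξ : ξ ∈ shell ρ L) (hξx : ξ + x ∈ shell ρ L) :
    ‖W.starProjection ξ + x‖ ≤ ‖W.starProjection ξ‖ + 2 * L := by
  have hsq := (le_abs_self _).trans (abs_sq_norm_sub_sq_norm_le_of_mem_shell hξx hξ)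
  rw [← sq_norm_starProjection_add_sub W ξ hx] at hsq
  refine le_of_sq_le_sq ?_ (by positivity)
  nlinarith [norm_nonneg (W.starProjection ξ)]

lemma abs_inner_starProjection_orthogonal_le_of_mem_shell (hL : 1 ≤ L) {ξ x w : E} (hx : x ∈ W)
    (hξ : ξ ∈ shell ρ L) (hξx : ξ + x ∈ shell ρ L) (hξxw : ξ + x + w ∈ shell ρ L) :
    |inner ℝ ξ (Wᗮ.starProjection w)| ≤
      L + ‖w‖ ^ 2 / 2 + (‖W.starProjection ξ‖ + 2 * L) * ‖w‖ := by
  have horth : inner ℝ x (Wᗮ.starProjection w) = 0 :=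
    inner_right_of_mem_orthogonal hx (starProjection_apply_mem _ _)
  have hproj : inner ℝ (ξ + x) (W.starProjection w) = inner ℝ (W.starProjection ξ + x) w := by
    rw [← inner_starProjection_left_eq_right, map_add, starProjection_eq_self_iff.mpr hx]
  have hsplit : inner ℝ ξ (Wᗮ.starProjection w) =
      inner ℝ (ξ + x) w - inner ℝ (W.starProjection ξ + x) w := by
    rw [← hproj, ← inner_sub_right, ← starProjection_orthogonal_val, inner_add_left, horth,
      add_zero]
  rw [hsplit]
  refine (abs_sub _ _).trans (add_le_add (abs_inner_le_of_add_mem_shell hξx hξxw) ?_)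
  refine (abs_real_inner_le_norm _ _).trans ?_
  gcongr
  exact norm_starProjection_add_le_of_mem_shell W hL hx hξ hξx

lemma exists_add_smul_starProjection_orthogonal_of_mem_sup {w z : E} (hz : z ∈ W ⊔ span ℝ {w}) :
    ∃ a ∈ W, ∃ t : ℝ, z = a + t • Wᗮ.starProjection w := by
  obtain ⟨a, ha, _, hmem, rfl⟩ := mem_sup.mp hz
  obtain ⟨t, rfl⟩ := mem_span_singleton.mp hmem
  refine ⟨a + t • W.starProjection w,
    W.add_mem ha (W.smul_mem t (starProjection_apply_mem _ _)), t, ?_⟩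
  rw [add_assoc, ← smul_add, starProjection_add_starProjection_orthogonal]

lemma norm_starProjection_sup_span_singleton_mul_le (ξ w : E)
    [(W ⊔ span ℝ {w}).HasOrthogonalProjection] :
    ‖(W ⊔ span ℝ {w}).starProjection ξ‖ * ‖Wᗮ.starProjection w‖ ≤
      ‖W.starProjection ξ‖ * ‖Wᗮ.starProjection w‖ + |inner ℝ ξ (Wᗮ.starProjection w)| := by
  set p := (W ⊔ span ℝ {w}).starProjection ξ with hp
  set q := Wᗮ.starProjection w
  obtain ⟨a, ha, t, hpat⟩ := exists_add_smul_starProjection_orthogonal_of_mem_sup W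
    (starProjection_apply_mem (W ⊔ span ℝ {w}) ξ)
  have horth : inner ℝ a (t • q) = 0 := by
    rw [inner_smul_right, inner_right_of_mem_orthogonal ha (starProjection_apply_mem _ _), mul_zero]
  have hpyth : ‖p‖ ^ 2 = ‖a‖ ^ 2 + ‖t • q‖ ^ 2 := by
    rw [hp, hpat, norm_add_sq_real, horth]
    ring
  have ha_le : ‖a‖ ≤ ‖p‖ := le_of_sq_le_sq (by nlinarith) (norm_nonneg p)
  have htq_le : |t| * ‖q‖ ≤ ‖p‖ := by
    rw [← Real.norm_eq_abs, ← norm_smul]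
    exact le_of_sq_le_sq (by nlinarith) (norm_nonneg p)
  have hself : ‖p‖ ^ 2 = inner ℝ (W.starProjection ξ) a + t * inner ℝ ξ q := by
    rw [← real_inner_self_eq_norm_sq, hp, inner_starProjection_left_eq_right,
      starProjection_eq_self_iff.mpr (starProjection_apply_mem _ _), hpat, inner_add_right,
      inner_smul_right, inner_starProjection_left_eq_right, starProjection_eq_self_iff.mpr ha]
  rcases (norm_nonneg p).eq_or_lt with hp0 | hp0
  · rw [← hp0, zero_mul]
    positivity
  refine le_of_mul_le_mul_left ?_ hp0
  calc ‖p‖ * (‖p‖ * ‖q‖) = (inner ℝ (W.starProjection ξ) a + t * inner ℝ ξ q) * ‖q‖ := by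
        rw [← hself]
        ring
    _ ≤ (‖W.starProjection ξ‖ * ‖a‖ + |t| * |inner ℝ ξ q|) * ‖q‖ := by
        refine mul_le_mul_of_nonneg_right (add_le_add (real_inner_le_norm _ _) ?_) (norm_nonneg q)
        exact (le_abs_self _).trans (abs_mul _ _).le
    _ = ‖W.starProjection ξ‖ * ‖q‖ * ‖a‖ + |inner ℝ ξ q| * (|t| * ‖q‖) := by ring
    _ ≤ ‖W.starProjection ξ‖ * ‖q‖ * ‖p‖ + |inner ℝ ξ q| * ‖p‖ := by gcongr
    _ = ‖p‖ * (‖W.starProjection ξ‖ * ‖q‖ + |inner ℝ ξ q|) := by ring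

-- The shift by `2 * L + D` absorbs the inhomogeneous terms, so that the estimate can be iterated
-- multiplicatively.
lemma norm_starProjection_sup_add_mul_le_of_mem_shell {D : ℝ} (hL : 1 ≤ L) (hD : 1 ≤ D)
    {ξ x w : E} [(W ⊔ span ℝ {w}).HasOrthogonalProjection] (hw : ‖w‖ ≤ D) (hx : x ∈ W)
    (hξ : ξ ∈ shell ρ L) (hξx : ξ + x ∈ shell ρ L) (hξxw : ξ + x + w ∈ shell ρ L) :
    (‖(W ⊔ span ℝ {w}).starProjection ξ‖ + (2 * L + D)) * ‖Wᗮ.starProjection w‖ ≤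
      (‖W.starProjection ξ‖ + (2 * L + D)) * (3 * D) := by
  set a := ‖W.starProjection ξ‖
  have ha : 0 ≤ a := norm_nonneg _
  have hq : ‖Wᗮ.starProjection w‖ ≤ D := (norm_starProjection_apply_le _ w).trans hw
  have hinner : |inner ℝ ξ (Wᗮ.starProjection w)| ≤ L + D ^ 2 / 2 + (a + 2 * L) * D :=
    (abs_inner_starProjection_orthogonal_le_of_mem_shell W hL hx hξ hξx hξxw).trans (by gcongr)
  calc _ ≤ (a + (2 * L + D)) * ‖Wᗮ.starProjection w‖ + |inner ℝ ξ (Wᗮ.starProjection w)| := by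
        linarith [norm_starProjection_sup_span_singleton_mul_le W ξ w]
    _ ≤ (a + (2 * L + D)) * D + (L + D ^ 2 / 2 + (a + 2 * L) * D) := by gcongr
    _ ≤ (a + (2 * L + D)) * (3 * D) := by nlinarith

end Shell

section Determinant

open Submodule

variable {E : Type*} [NormedAddCommGroup E] [InnerProductSpace ℝ E]

lemma abs_orthonormalBasis_det_eq {ι : Type*} [Fintype ι] [DecidableEq ι]
    (b b' : OrthonormalBasis ι ℝ E) (y : ι → E) :
    |b.toBasis.det y| = |b'.toBasis.det y| := by
  rw [b.toBasis.det.eq_smul_basis_det b'.toBasis, AlternatingMap.smul_apply, smul_eq_mul, abs_mul]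
  rcases b.det_to_matrix_orthonormalBasis_real b' with h | h <;> simp [h]

variable [FiniteDimensional ℝ E]

/-- The component of `y i` orthogonal to the earlier vectors `y j`, `j < i`: the `i`-th vector of
the Gram-Schmidt process, written through orthogonal projections. -/
def orthogonalResidual {ι : Type*} [Preorder ι] (y : ι → E) (i : ι) : E :=
  (span ℝ (y '' Iio i))ᗮ.starProjection (y i)

lemma norm_orthogonalResidual_le {ι : Type*} [Preorder ι] (y : ι → E) (i : ι) :
    ‖orthogonalResidual y i‖ ≤ ‖y i‖ :=
  norm_starProjection_apply_le _ _

lemma orthogonalResidual_comp_val {n : ℕ} (y : ℕ → E) (i : Fin n) :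
    orthogonalResidual (fun j : Fin n => y j) i = orthogonalResidual y i := by
  have himage : (fun j : Fin n => y j) '' Iio i = y '' Iio (i : ℕ) := by
    rw [← Fin.image_val_Iio, image_image]
  simp only [orthogonalResidual, himage]

variable {ι : Type*} [LinearOrder ι] [LocallyFiniteOrderBot ι] [Fintype ι]

lemma abs_det_le_prod_norm_orthogonalResidual (b : OrthonormalBasis ι ℝ E) (y : ι → E) :
    |b.toBasis.det y| ≤ ∏ i, ‖orthogonalResidual y i‖ := by
  have hrank : Module.finrank ℝ E = Fintype.card ι := Module.finrank_eq_card_basis b.toBasis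
  let e := InnerProductSpace.gramSchmidtOrthonormalBasis hrank y
  have he_mem (i : ι) : e i ∈ (span ℝ (y '' Iio i))ᗮ := by
    have hle : span ℝ (y '' Iio i) ≤ (span ℝ {e i})ᗮ := by
      rw [span_le]
      rintro _ ⟨j, hj, rfl⟩
      rw [SetLike.mem_coe, mem_orthogonal_singleton_iff_inner_right]
      exact InnerProductSpace.gramSchmidtOrthonormalBasis_inv_triangular hrank y hj
    exact le_orthogonal_iff_le_orthogonal.mp hle (mem_span_singleton_self _)
  rw [abs_orthonormalBasis_det_eq b e, InnerProductSpace.gramSchmidtOrthonormalBasis_det,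
    Finset.abs_prod]
  refine Finset.prod_le_prod (fun _ _ => abs_nonneg _) fun i _ => ?_
  calc |inner ℝ (e i) (y i)| = |inner ℝ (e i) (orthogonalResidual y i)| := by
        rw [orthogonalResidual, ← inner_starProjection_left_eq_right,
          starProjection_eq_self_iff.mpr (he_mem i)]
    _ ≤ ‖e i‖ * ‖orthogonalResidual y i‖ := abs_real_inner_le_norm _ _
    _ = ‖orthogonalResidual y i‖ := by rw [e.norm_eq_one, one_mul]

lemma abs_det_le_prod_norm (b : OrthonormalBasis ι ℝ E) (y : ι → E) :
    |b.toBasis.det y| ≤ ∏ i, ‖y i‖ :=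
  (abs_det_le_prod_norm_orthogonalResidual b y).trans
    (Finset.prod_le_prod (fun _ _ => norm_nonneg _) fun i _ => norm_orthogonalResidual_le y i)

lemma abs_mul_abs_det_le (b : OrthonormalBasis ι ℝ E) {y : ι → E} {D : ℝ} (hy : ∀ k, ‖y k‖ ≤ D)
    (t : ι → ℝ) (i : ι) :
    |t i| * |b.toBasis.det y| ≤ ‖∑ k, t k • y k‖ * D ^ (Fintype.card ι - 1) := by
  set z := ∑ k, t k • y k with hz
  calc |t i| * |b.toBasis.det y| = |b.toBasis.det (Function.update y i z)| := by
        rw [hz, alternatingMap_update_sum_smul, smul_eq_mul, abs_mul]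
    _ ≤ ∏ k, ‖Function.update y i z k‖ := abs_det_le_prod_norm b _
    _ = ‖z‖ * ∏ k ∈ Finset.univ.erase i, ‖Function.update y i z k‖ := by
        rw [← Finset.mul_prod_erase _ _ (Finset.mem_univ i), Function.update_self]
    _ ≤ ‖z‖ * ∏ _k ∈ Finset.univ.erase i, D := by
        gcongr with k hk
        rw [Function.update_of_ne (Finset.ne_of_mem_erase hk)]
        exact hy k
    _ = ‖z‖ * D ^ (Fintype.card ι - 1) := by
        rw [Finset.prod_const, Finset.card_erase_of_mem (Finset.mem_univ i), Finset.card_univ]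

end Determinant

section ShellFlag

open Submodule

variable {E : Type*} [NormedAddCommGroup E] [InnerProductSpace ℝ E] [FiniteDimensional ℝ E]
  {ρ L D : ℝ} {ξ : E} {y : ℕ → E} {n : ℕ}

lemma norm_starProjection_span_mul_prod_orthogonalResidual_le (hL : 1 ≤ L) (hD : 1 ≤ D)
    (hξ : ξ ∈ shell ρ L) (hy : ∀ i < n, ‖y i‖ ≤ D)
    (hstep : ∀ i < n, ∃ x ∈ span ℝ (y '' Iio i), ξ + x ∈ shell ρ L ∧ ξ + x + y i ∈ shell ρ L) :
    (‖(span ℝ (y '' Iio n)).starProjection ξ‖ + (2 * L + D)) *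
      ∏ i ∈ Finset.range n, ‖orthogonalResidual y i‖ ≤ (2 * L + D) * (3 * D) ^ n := by
  induction n with
  | zero => simp
  | succ n ih =>
    have hspan : span ℝ (y '' Iio (n + 1)) = span ℝ (y '' Iio n) ⊔ span ℝ {y n} := by
      rw [← Order.succ_eq_add_one, Order.Iio_succ_eq_insert, image_insert_eq, span_insert, sup_comm]
    obtain ⟨x, hx, hξx, hξxy⟩ := hstep n n.lt_succ_self
    have hlast := norm_starProjection_sup_add_mul_le_of_mem_shell (span ℝ (y '' Iio n)) hL hD
      (hy n n.lt_succ_self) hx hξ hξx hξxy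
    have hprev := ih (fun i hi => hy i (by omega)) fun i hi => hstep i (by omega)
    simp only [hspan, Finset.prod_range_succ]
    calc _ = (‖(span ℝ (y '' Iio n) ⊔ span ℝ {y n}).starProjection ξ‖ + (2 * L + D)) *
            ‖orthogonalResidual y n‖ * ∏ i ∈ Finset.range n, ‖orthogonalResidual y i‖ := by ring
      _ ≤ (‖(span ℝ (y '' Iio n)).starProjection ξ‖ + (2 * L + D)) * (3 * D) *
            ∏ i ∈ Finset.range n, ‖orthogonalResidual y i‖ :=
          mul_le_mul_of_nonneg_right hlast (by positivity)
      _ = (‖(span ℝ (y '' Iio n)).starProjection ξ‖ + (2 * L + D)) *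
            (∏ i ∈ Finset.range n, ‖orthogonalResidual y i‖) * (3 * D) := by ring
      _ ≤ (2 * L + D) * (3 * D) ^ n * (3 * D) := by gcongr
      _ = (2 * L + D) * (3 * D) ^ (n + 1) := by ring

lemma norm_starProjection_span_mul_abs_det_le {d : ℕ} (b : OrthonormalBasis (Fin d) ℝ E)
    (hL : 1 ≤ L) (hD : 1 ≤ D) (hξ : ξ ∈ shell ρ L) (hnd : n ≤ d) (hy : ∀ i < d, ‖y i‖ ≤ D)
    (hstep : ∀ i < n, ∃ x ∈ span ℝ (y '' Iio i), ξ + x ∈ shell ρ L ∧ ξ + x + y i ∈ shell ρ L) :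
    (‖(span ℝ (y '' Iio n)).starProjection ξ‖ + (2 * L + D)) *
      |b.toBasis.det fun j : Fin d => y j| ≤ 3 ^ (d + 1) * L * D ^ (d + 1) := by
  have hdet : |b.toBasis.det fun j : Fin d => y j| ≤
      (∏ i ∈ Finset.range n, ‖orthogonalResidual y i‖) * (3 * D) ^ (d - n) := by
    refine (abs_det_le_prod_norm_orthogonalResidual b _).trans ?_
    simp only [orthogonalResidual_comp_val]
    rw [Fin.prod_univ_eq_prod_range fun i => ‖orthogonalResidual y i‖,
      ← Finset.prod_range_mul_prod_Ico _ hnd, ← Nat.card_Ico, ← Finset.prod_const]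
    gcongr with i hi
    linarith [norm_orthogonalResidual_le y i, hy i (Finset.mem_Ico.mp hi).2]
  have hflag := norm_starProjection_span_mul_prod_orthogonalResidual_le hL hD hξ
    (fun i hi => hy i (hi.trans_le hnd)) hstep
  calc _ ≤ (‖(span ℝ (y '' Iio n)).starProjection ξ‖ + (2 * L + D)) *
          ((∏ i ∈ Finset.range n, ‖orthogonalResidual y i‖) * (3 * D) ^ (d - n)) := by gcongr
    _ ≤ (2 * L + D) * (3 * D) ^ n * (3 * D) ^ (d - n) := by
        rw [← mul_assoc]
        gcongr
    _ = (2 * L + D) * (3 * D) ^ d := by rw [mul_assoc, ← pow_add, Nat.add_sub_cancel' hnd]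
    _ ≤ 3 * L * D * (3 * D) ^ d := by
        gcongr
        nlinarith
    _ = 3 ^ (d + 1) * L * D ^ (d + 1) := by ring

end ShellFlag

section StrongDiophantine

variable {d l : ℕ} {ω : Fin l → EuclideanSpace ℝ (Fin d)} {B₀ μhat Ltilde : ℝ}

lemma thetaDet_eq_det (ω : Fin l → EuclideanSpace ℝ (Fin d)) (N : Matrix (Fin d) (Fin l) ℤ) :
    thetaDet ω N =
      (EuclideanSpace.basisFun (Fin d) ℝ).toBasis.det fun j => intComb ω (N j) := by
  rw [thetaDet, Module.Basis.det_apply]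
  congr 1
  ext i j
  simp [Module.Basis.toMatrix_apply, intComb]

lemma starNorm_le {N : Matrix (Fin d) (Fin l) ℤ} (hN : ∀ j, supAbs (N j) ≤ Ltilde) :
    starNorm N ≤ d * l * Ltilde := by
  rw [starNorm]
  push_cast [Nat.cast_natAbs]
  calc ∑ j, ∑ k, |(N j k : ℝ)| ≤ ∑ _j : Fin d, ∑ _k : Fin l, Ltilde := by
        gcongr with j _ k
        exact (abs_le_supAbs (N j) k).trans (hN j)
    _ = d * l * Ltilde := by
        simp only [Finset.sum_const, Finset.card_univ, Fintype.card_fin, nsmul_eq_mul]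
        ring

lemma starNorm_pos {N : Matrix (Fin d) (Fin l) ℤ} (hN : N ≠ 0) : 0 < starNorm N := by
  rw [starNorm, Nat.cast_pos, Nat.pos_iff_ne_zero]
  refine mt (fun hsum => ?_) hN
  ext j k
  have hrow := Finset.sum_eq_zero_iff.mp hsum j (Finset.mem_univ j)
  exact Int.natAbs_eq_zero.mp (Finset.sum_eq_zero_iff.mp hrow k (Finset.mem_univ k))

lemma SDC.mul_rpow_lt_abs_det (hS : SDC d l ω B₀ μhat) (hd : 0 < d) (hB₀ : 0 ≤ B₀)
    (hμ : 0 ≤ μhat) {u : Fin d → Fin l → ℤ} (hu : LinearIndependent ℝ (intCast ∘ u))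
    (hu_le : ∀ j, supAbs (u j) ≤ Ltilde) :
    B₀ * (d * l * Ltilde) ^ (-μhat) <
      |(EuclideanSpace.basisFun (Fin d) ℝ).toBasis.det fun j => intComb ω (u j)| := by
  let N : Matrix (Fin d) (Fin l) ℤ := Matrix.of u
  have hrow : LinearIndependent ℝ (N.map fun z => (z : ℝ)).row := hu
  have hrank : (N.map fun z => (z : ℝ)).rank = d := by simpa using hrow.rank_matrix
  have hN : N ≠ 0 := by
    intro hzero
    refine hu.ne_zero ⟨0, hd⟩ ?_
    rw [Function.comp_apply, ← intCast_zero]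
    exact congrArg intCast (congrFun hzero ⟨0, hd⟩)
  calc B₀ * (d * l * Ltilde) ^ (-μhat) ≤ B₀ * starNorm N ^ (-μhat) :=
        mul_le_mul_of_nonneg_left (Real.rpow_le_rpow_of_nonpos (starNorm_pos hN)
          (starNorm_le hu_le) (neg_nonpos.mpr hμ)) hB₀
    _ < |thetaDet ω N| := hS N hrank
    _ = _ := by rw [thetaDet_eq_det]; rfl

/-- The loss factor `(d l L̃) ^ μ / B₀`, `μ = μhat + d + 1`, incurred when a determinant of `d`
integer combinations of size at most `L̃`, weighed against `(d l L̃) ^ (d + 1)`, is divided out by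
means of the Strong Diophantine Condition. -/
def sdcFactor (d l : ℕ) (B₀ μhat Ltilde : ℝ) : ℝ := (d * l * Ltilde) ^ (μhat + d + 1) / B₀

lemma sdcFactor_nonneg (hB₀ : 0 ≤ B₀) (hLt : 0 ≤ Ltilde) : 0 ≤ sdcFactor d l B₀ μhat Ltilde := by
  rw [sdcFactor]
  positivity

lemma sdcFactor_eq (hLt : 0 ≤ Ltilde) :
    sdcFactor d l B₀ μhat Ltilde = sdcFactor d l B₀ μhat 1 * Ltilde ^ (μhat + d + 1) := by
  rw [sdcFactor, sdcFactor, Real.mul_rpow (by positivity) hLt, mul_one]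
  ring

lemma SDC.le_mul_sdcFactor_of_mul_abs_det_le (hS : SDC d l ω B₀ μhat) (hd : 0 < d) (hl : 0 < l)
    (hB₀ : 0 < B₀) (hμ : 0 ≤ μhat) (hLt : 0 < Ltilde) {u : Fin d → Fin l → ℤ}
    (hu : LinearIndependent ℝ (intCast ∘ u)) (hu_le : ∀ j, supAbs (u j) ≤ Ltilde)
    {X Y : ℝ} (hY : 0 ≤ Y)
    (hXY : X * |(EuclideanSpace.basisFun (Fin d) ℝ).toBasis.det fun j => intComb ω (u j)| ≤
      Y * (d * l * Ltilde) ^ (d + 1)) :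
    X ≤ Y * sdcFactor d l B₀ μhat Ltilde := by
  have hlower := hS.mul_rpow_lt_abs_det hd hB₀.le hμ hu hu_le
  set det := |(EuclideanSpace.basisFun (Fin d) ℝ).toBasis.det fun j => intComb ω (u j)|
  have hD : (0 : ℝ) < d * l * Ltilde := by positivity
  have hdet : 0 < det := lt_of_le_of_lt (by positivity) hlower
  have hpow : (d * l * Ltilde) ^ (d + 1) =
      sdcFactor d l B₀ μhat Ltilde * (B₀ * (d * l * Ltilde) ^ (-μhat)) := by
    rw [sdcFactor, ← mul_assoc, div_mul_cancel₀ _ hB₀.ne', ← Real.rpow_add hD, ← Real.rpow_natCast]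
    congr 1
    push_cast
    ring
  have hfactor : 0 ≤ sdcFactor d l B₀ μhat Ltilde := sdcFactor_nonneg hB₀.le hLt.le
  refine le_of_mul_le_mul_right (hXY.trans ?_) hdet
  rw [hpow, ← mul_assoc]
  exact mul_le_mul_of_nonneg_left hlower.le (mul_nonneg hY hfactor)

end StrongDiophantine

section ResonantBasis

variable {d l : ℕ} {ω : Fin l → EuclideanSpace ℝ (Fin d)} {ρ L Ltilde : ℝ}
  {ξ : EuclideanSpace ℝ (Fin d)} {u : ℕ → Fin l → ℤ} {m m' : Fin l → ℤ}

lemma zero_mem_res (hξ : ξ ∈ shell ρ L) : 0 ∈ Res ω ρ L ξ := by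
  simpa [Res, intComb, shell] using hξ

lemma intComb_mem_span {α : Type*} {v : α → Fin l → ℤ} {S : Set α}
    (hm : intCast m ∈ Submodule.span ℝ (intCast ∘ v '' S)) :
    intComb ω m ∈ Submodule.span ℝ (intComb ω ∘ v '' S) := by
  have hmap := Submodule.mem_map_of_mem (f := Fintype.linearCombination ℝ ω) hm
  rwa [Submodule.map_span, ← image_comp] at hmap

/-- The space `V = span_ℝ Υ^ℤ_{L,L̃}(ξ)`, whose dimension is the rank of `Υ^ℤ_{L,L̃}(ξ)` and whose
integer points form `Γ^ℤ(ξ)`. -/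
abbrev upsSpan (ω : Fin l → EuclideanSpace ℝ (Fin d)) (ρ L Ltilde : ℝ)
    (ξ : EuclideanSpace ℝ (Fin d)) : Submodule ℝ (Fin l → ℝ) :=
  Submodule.span ℝ (intCast '' Ups ω ρ L Ltilde ξ)

lemma zero_mem_gammaZ : 0 ∈ GammaZ ω ρ L Ltilde ξ := by
  change intCast 0 ∈ upsSpan ω ρ L Ltilde ξ
  rw [intCast_zero]
  exact Submodule.zero_mem _

/-- Linearly independent integer vectors `u 0, …, u (d - 1)` of size at most `L̃` whose first
`Rank Υ^ℤ_{L,L̃}(ξ)` members span `upsSpan`, each of these being a step between two resonant points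
that starts in the span of its predecessors. The values `u i` for `d ≤ i` are irrelevant. -/
structure IsResonantBasis (ω : Fin l → EuclideanSpace ℝ (Fin d)) (ρ L Ltilde : ℝ)
    (ξ : EuclideanSpace ℝ (Fin d)) (u : ℕ → Fin l → ℤ) : Prop where
  linearIndepOn : LinearIndepOn ℝ (intCast ∘ u) (Iio d)
  supAbs_le : ∀ i < d, supAbs (u i) ≤ Ltilde
  span_eq : Submodule.span ℝ (intCast ∘ u '' Iio (Module.finrank ℝ (upsSpan ω ρ L Ltilde ξ))) =
    upsSpan ω ρ L Ltilde ξ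
  exists_step : ∀ i < Module.finrank ℝ (upsSpan ω ρ L Ltilde ξ), ∃ x ∈ Res ω ρ L ξ,
    intCast x ∈ Submodule.span ℝ (intCast ∘ u '' Iio i) ∧ x + u i ∈ Res ω ρ L ξ

-- The step is the first one by which a chain of coupled vectors leaves `W`.
lemma exists_step_notMem_of_not_upsSpan_le {W : Submodule ℝ (Fin l → ℝ)}
    (hW : ¬upsSpan ω ρ L Ltilde ξ ≤ W) :
    ∃ w, intCast w ∉ W ∧ supAbs w ≤ Ltilde ∧ intCast w ∈ upsSpan ω ρ L Ltilde ξ ∧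
      ∃ x ∈ Res ω ρ L ξ, intCast x ∈ W ∧ x + w ∈ Res ω ρ L ξ := by
  rw [Submodule.span_le, not_subset] at hW
  obtain ⟨_, ⟨_, ⟨k, c, hc_zero, rfl, hc_res, hc_step⟩, rfl⟩, hk⟩ := hW
  have hc_mem (i : ℕ) (hi : i ≤ k) : intCast (c i) ∈ upsSpan ω ρ L Ltilde ξ :=
    Submodule.subset_span ⟨c i, ⟨i, c, hc_zero, rfl, fun j hj => hc_res j (hj.trans hi),
      fun j hj => hc_step j (hj.trans_le hi)⟩, rfl⟩
  obtain ⟨i, hik, hi_mem, hi_notMem⟩ :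
      ∃ i < k, intCast (c i) ∈ W ∧ intCast (c (i + 1)) ∉ W := by
    by_contra! hstay
    have hall (i : ℕ) (hi : i ≤ k) : intCast (c i) ∈ W := by
      induction i with
      | zero => rw [hc_zero, intCast_zero]; exact W.zero_mem
      | succ i ih => exact hstay i hi (ih (by omega))
    exact hk (hall k le_rfl)
  refine ⟨c (i + 1) - c i, ?_, (hc_step i hik).le, ?_, c i, hc_res i hik.le, hi_mem, ?_⟩
  · rwa [intCast_sub, W.sub_mem_iff_left hi_mem]
  · rw [intCast_sub]
    exact Submodule.sub_mem _ (hc_mem (i + 1) hik) (hc_mem i hik.le)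
  · rw [add_sub_cancel]
    exact hc_res (i + 1) hik

lemma exists_supAbs_le_one_notMem {W : Submodule ℝ (Fin l → ℝ)} (hW : Module.finrank ℝ W < l) :
    ∃ w, intCast w ∉ W ∧ supAbs w ≤ 1 := by
  have hW_ne_top : W ≠ ⊤ := by
    rintro rfl
    simp at hW
  obtain ⟨k, hk⟩ := exists_pi_single_notMem_of_ne_top hW_ne_top
  have hcast : intCast (Pi.single k 1 : Fin l → ℤ) = Pi.single k 1 :=
    funext fun j => by simp [intCast, Pi.single_apply]
  refine ⟨Pi.single k 1, hcast ▸ hk, ?_⟩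
  rw [← norm_intCast, hcast, Pi.norm_single, norm_one]

lemma exists_isResonantBasis (hl : d ≤ l) (hLt : 1 ≤ Ltilde)
    (hs : Module.finrank ℝ (upsSpan ω ρ L Ltilde ξ) ≤ d) :
    ∃ u, IsResonantBasis ω ρ L Ltilde ξ u := by
  let V := upsSpan ω ρ L Ltilde ξ
  let IsStep (W : Submodule ℝ (Fin l → ℝ)) (w : Fin l → ℤ) : Prop :=
    intCast w ∈ V ∧ ∃ x ∈ Res ω ρ L ξ, intCast x ∈ W ∧ x + w ∈ Res ω ρ L ξ
  have hstep (W : Submodule ℝ (Fin l → ℝ)) (hW : Module.finrank ℝ W < d) :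
      ∃ w, intCast w ∉ W ∧ supAbs w ≤ Ltilde ∧ (¬V ≤ W → IsStep W w) := by
    by_cases hV : V ≤ W
    · obtain ⟨w, hwW, hw⟩ := exists_supAbs_le_one_notMem (hW.trans_le hl)
      exact ⟨w, hwW, hw.trans hLt, absurd hV⟩
    · obtain ⟨w, hwW, hw, hw_step⟩ := exists_step_notMem_of_not_upsSpan_le hV
      exact ⟨w, hwW, hw, fun _ => hw_step⟩
  obtain ⟨u, hu_indep, hu⟩ := exists_linearIndepOn_Iio_of_forall_exists_notMem intCast hstep
  have hu_indep_of_le {i : ℕ} (hi : i ≤ d) : LinearIndepOn ℝ (intCast ∘ u) (Iio i) :=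
    hu_indep.mono (Iio_subset_Iio hi)
  have hu_step (i : ℕ) (hi : i < Module.finrank ℝ V) :
      IsStep (Submodule.span ℝ (intCast ∘ u '' Iio i)) (u i) := by
    have hid : i < d := hi.trans_le hs
    refine (hu i hid).2 fun hle => hi.not_ge ?_
    rw [← finrank_span_image_Iio (hu_indep_of_le hid.le)]
    exact Submodule.finrank_mono hle
  refine ⟨u, hu_indep, fun i hi => (hu i hi).1, ?_, fun i hi => (hu_step i hi).2⟩
  refine Submodule.eq_of_le_of_finrank_eq (Submodule.span_le.mpr ?_)
    (finrank_span_image_Iio (hu_indep_of_le hs))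
  rintro _ ⟨i, hi, rfl⟩
  exact (hu_step i hi).1

end ResonantBasis

section ResonantPoints

variable {d l : ℕ} {ω : Fin l → EuclideanSpace ℝ (Fin d)} {B₀ μhat ρ L Ltilde : ℝ}
  {ξ : EuclideanSpace ℝ (Fin d)} {u : ℕ → Fin l → ℤ}

namespace IsResonantBasis

lemma linearIndependent (hu : IsResonantBasis ω ρ L Ltilde ξ u) :
    LinearIndependent ℝ (intCast ∘ fun j : Fin d => u j) :=
  hu.linearIndepOn.comp (fun j : Fin d => ⟨j, j.isLt⟩) fun _ _ h =>
    Fin.ext (congrArg Subtype.val h)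

lemma norm_intComb_le (hu : IsResonantBasis ω ρ L Ltilde ξ u) (hω : ∀ j, ‖ω j‖ ≤ d) {i : ℕ}
    (hi : i < d) : ‖intComb ω (u i)‖ ≤ d * l * Ltilde :=
  (_root_.norm_intComb_le hω (u i)).trans (by gcongr; exact hu.supAbs_le i hi)

lemma norm_starProjection_add_le (hu : IsResonantBasis ω ρ L Ltilde ξ u)
    (hS : SDC d l ω B₀ μhat) (hω : ∀ j, ‖ω j‖ ≤ d) (hd : 0 < d) (hl : 0 < l) (hB₀ : 0 < B₀)
    (hμ : 0 ≤ μhat) (hL : 1 ≤ L) (hLt : 1 ≤ Ltilde) (hξ : ξ ∈ shell ρ L)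
    (hs : Module.finrank ℝ (upsSpan ω ρ L Ltilde ξ) ≤ d) :
    ‖(Submodule.span ℝ (intComb ω ∘ u ''
        Iio (Module.finrank ℝ (upsSpan ω ρ L Ltilde ξ)))).starProjection ξ‖ + 2 * L ≤
      3 ^ (d + 1) * L * sdcFactor d l B₀ μhat Ltilde := by
  have hD : (1 : ℝ) ≤ d * l * Ltilde :=
    one_le_mul_of_one_le_of_one_le (mod_cast Nat.mul_pos hd hl) hLt
  have hdet := norm_starProjection_span_mul_abs_det_le (y := intComb ω ∘ u)
    (EuclideanSpace.basisFun (Fin d) ℝ) hL hD hξ hs (fun i hi => hu.norm_intComb_le hω hi) ?_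
  · have hle := hS.le_mul_sdcFactor_of_mul_abs_det_le hd hl hB₀ hμ (by positivity)
      hu.linearIndependent (fun j => hu.supAbs_le j j.isLt) (by positivity) hdet
    linarith
  · intro i hi
    obtain ⟨x, hx, hx_mem, hxu⟩ := hu.exists_step i hi
    refine ⟨intComb ω x, intComb_mem_span hx_mem, hx, ?_⟩
    rw [add_assoc, Function.comp_apply, ← intComb_add]
    exact hxu

lemma norm_intComb_sub_le (hu : IsResonantBasis ω ρ L Ltilde ξ u)
    (hS : SDC d l ω B₀ μhat) (hω : ∀ j, ‖ω j‖ ≤ d) (hd : 0 < d) (hl : 0 < l) (hB₀ : 0 < B₀)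
    (hμ : 0 ≤ μhat) (hL : 1 ≤ L) (hLt : 1 ≤ Ltilde) (hξ : ξ ∈ shell ρ L)
    (hs : Module.finrank ℝ (upsSpan ω ρ L Ltilde ξ) ≤ d) {m m' : Fin l → ℤ}
    (hm : m ∈ GammaZ ω ρ L Ltilde ξ ∩ Res ω ρ L ξ)
    (hm' : m' ∈ GammaZ ω ρ L Ltilde ξ ∩ Res ω ρ L ξ) :
    ‖intComb ω (m - m')‖ ≤ 2 * 3 ^ (d + 1) * L * sdcFactor d l B₀ μhat Ltilde := by
  set W := Submodule.span ℝ
    (intComb ω ∘ u '' Iio (Module.finrank ℝ (upsSpan ω ρ L Ltilde ξ)))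
  have hproj : ‖W.starProjection ξ‖ + 2 * L ≤ 3 ^ (d + 1) * L * sdcFactor d l B₀ μhat Ltilde :=
    hu.norm_starProjection_add_le hS hω hd hl hB₀ hμ hL hLt hξ hs
  have hpoint {n : Fin l → ℤ} (hn : n ∈ GammaZ ω ρ L Ltilde ξ ∩ Res ω ρ L ξ) :
      ‖W.starProjection ξ + intComb ω n‖ ≤ ‖W.starProjection ξ‖ + 2 * L :=
    norm_starProjection_add_le_of_mem_shell W hL
      (intComb_mem_span (hu.span_eq.symm ▸ hn.1)) hξ hn.2
  calc ‖intComb ω (m - m')‖ =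
        ‖(W.starProjection ξ + intComb ω m) - (W.starProjection ξ + intComb ω m')‖ := by
        rw [intComb_sub, add_sub_add_left_eq_sub]
    _ ≤ _ := norm_sub_le _ _
    _ ≤ 2 * 3 ^ (d + 1) * L * sdcFactor d l B₀ μhat Ltilde := by linarith [hpoint hm, hpoint hm']

lemma exists_sum_smul_eq (hu : IsResonantBasis ω ρ L Ltilde ξ u)
    (hs : Module.finrank ℝ (upsSpan ω ρ L Ltilde ξ) ≤ d) {n : Fin l → ℤ}
    (hn : intCast n ∈ upsSpan ω ρ L Ltilde ξ) :
    ∃ t : Fin d → ℝ, ∑ j, t j • intCast (u j) = intCast n := by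
  rw [← Submodule.mem_span_range_iff_exists_fun]
  rw [← hu.span_eq] at hn
  refine Submodule.span_mono ?_ hn
  rintro _ ⟨i, hi, rfl⟩
  exact ⟨⟨i, lt_of_lt_of_le hi hs⟩, rfl⟩

lemma abs_mul_le_of_sum_smul_eq (hu : IsResonantBasis ω ρ L Ltilde ξ u)
    (hS : SDC d l ω B₀ μhat) (hω : ∀ j, ‖ω j‖ ≤ d) (hd : 0 < d) (hl : 0 < l) (hB₀ : 0 < B₀)
    (hμ : 0 ≤ μhat) (hLt : 1 ≤ Ltilde) {n : Fin l → ℤ} {t : Fin d → ℝ}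
    (ht : ∑ j, t j • intCast (u j) = intCast n) (j : Fin d) :
    |t j| * Ltilde ≤ ‖intComb ω n‖ * sdcFactor d l B₀ μhat Ltilde := by
  set D : ℝ := d * l * Ltilde
  have hLtD : Ltilde ≤ D :=
    le_mul_of_one_le_left (by positivity) (mod_cast Nat.mul_pos hd hl)
  have ht_comb : ∑ j, t j • intComb ω (u j) = intComb ω n := by
    simp only [← linearCombination_intCast, ← ht, map_sum, map_smul]
  have hcramer := abs_mul_abs_det_le (EuclideanSpace.basisFun (Fin d) ℝ)
    (fun k : Fin d => hu.norm_intComb_le hω k.isLt) t j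
  rw [ht_comb, Fintype.card_fin] at hcramer
  refine hS.le_mul_sdcFactor_of_mul_abs_det_le hd hl hB₀ hμ (by positivity)
    hu.linearIndependent (fun k => hu.supAbs_le k k.isLt) (norm_nonneg _) ?_
  calc |t j| * Ltilde * _ = |t j| * _ * Ltilde := mul_right_comm _ _ _
    _ ≤ ‖intComb ω n‖ * D ^ (d - 1) * D := by gcongr
    _ = ‖intComb ω n‖ * D ^ d := by rw [mul_assoc, pow_sub_one_mul hd.ne']
    _ ≤ ‖intComb ω n‖ * D ^ (d + 1) := by
        gcongr
        exacts [hLt.trans hLtD, d.le_succ]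

lemma supAbs_le_of_mem_upsSpan (hu : IsResonantBasis ω ρ L Ltilde ξ u)
    (hS : SDC d l ω B₀ μhat) (hω : ∀ j, ‖ω j‖ ≤ d) (hd : 0 < d) (hl : 0 < l) (hB₀ : 0 < B₀)
    (hμ : 0 ≤ μhat) (hLt : 1 ≤ Ltilde) (hs : Module.finrank ℝ (upsSpan ω ρ L Ltilde ξ) ≤ d)
    {n : Fin l → ℤ} (hn : intCast n ∈ upsSpan ω ρ L Ltilde ξ) :
    supAbs n ≤ d * (‖intComb ω n‖ * sdcFactor d l B₀ μhat Ltilde) := by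
  obtain ⟨t, ht⟩ := hu.exists_sum_smul_eq hs hn
  rw [← norm_intCast, ← ht]
  calc ‖∑ j, t j • intCast (u j)‖ ≤ ∑ j, |t j| * supAbs (u j) := by
        simpa only [norm_smul, norm_intCast, Real.norm_eq_abs] using
          norm_sum_le Finset.univ fun j => t j • intCast (u j)
    _ ≤ ∑ _j : Fin d, ‖intComb ω n‖ * sdcFactor d l B₀ μhat Ltilde :=
        Finset.sum_le_sum fun j _ =>
          (mul_le_mul_of_nonneg_left (hu.supAbs_le j j.isLt) (abs_nonneg _)).trans
            (hu.abs_mul_le_of_sum_smul_eq hS hω hd hl hB₀ hμ hLt ht j)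
    _ = d * (‖intComb ω n‖ * sdcFactor d l B₀ μhat Ltilde) := by
        rw [Finset.sum_const, Finset.card_univ, Fintype.card_fin, nsmul_eq_mul]

end IsResonantBasis

lemma exists_forall_norm_intComb_sub_le_and_supAbs_sub_le (hd : 0 < d) (hl : d ≤ l)
    (hB₀ : 0 < B₀) (hμ : 0 ≤ μhat) :
    ∃ A : ℝ, 0 ≤ A ∧ ∀ ω : Fin l → EuclideanSpace ℝ (Fin d), (∀ j, ‖ω j‖ ≤ d) →
      SDC d l ω B₀ μhat → ∀ ρ L Ltilde : ℝ, 1 ≤ L → 1 ≤ Ltilde → ∀ ξ ∈ shell ρ L,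
      Module.finrank ℝ (upsSpan ω ρ L Ltilde ξ) ≤ d →
      ∀ m ∈ GammaZ ω ρ L Ltilde ξ ∩ Res ω ρ L ξ, ∀ m' ∈ GammaZ ω ρ L Ltilde ξ ∩ Res ω ρ L ξ,
        ‖intComb ω (m - m')‖ ≤ A * L * Ltilde ^ (μhat + d + 1) ∧
        supAbs (m - m') ≤ A * L * Ltilde ^ (2 * (μhat + d + 1)) := by
  set G := sdcFactor d l B₀ μhat 1 with hG
  have hG_nonneg : 0 ≤ G := sdcFactor_nonneg hB₀.le zero_le_one
  let C₁ : ℝ := 2 * 3 ^ (d + 1) * G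
  let C₂ : ℝ := d * C₁ * G
  have hC₁ : 0 ≤ C₁ := by positivity
  have hC₂ : 0 ≤ C₂ := by positivity
  refine ⟨C₁ + C₂, by positivity, fun ω hω hS ρ L Ltilde hL hLt ξ hξ hs m hm m' hm' => ?_⟩
  have hl₀ : 0 < l := hd.trans_le hl
  obtain ⟨u, hu⟩ := exists_isResonantBasis hl hLt hs
  have hnorm : ‖intComb ω (m - m')‖ ≤ C₁ * L * Ltilde ^ (μhat + d + 1) := by
    refine (hu.norm_intComb_sub_le hS hω hd hl₀ hB₀ hμ hL hLt hξ hs hm hm').trans_eq ?_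
    rw [sdcFactor_eq (by positivity), ← hG]
    ring
  have hsup : supAbs (m - m') ≤ C₂ * L * Ltilde ^ (2 * (μhat + d + 1)) := by
    have hmem : intCast (m - m') ∈ upsSpan ω ρ L Ltilde ξ :=
      intCast_sub m m' ▸ Submodule.sub_mem _ hm.1 hm'.1
    calc supAbs (m - m') ≤ d * (‖intComb ω (m - m')‖ * sdcFactor d l B₀ μhat Ltilde) :=
          hu.supAbs_le_of_mem_upsSpan hS hω hd hl₀ hB₀ hμ hLt hs hmem
      _ ≤ d * (C₁ * L * Ltilde ^ (μhat + d + 1) * (G * Ltilde ^ (μhat + d + 1))) := by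
          rw [sdcFactor_eq (by positivity), ← hG]
          gcongr
      _ = C₂ * L * Ltilde ^ (2 * (μhat + d + 1)) := by
          change _ = d * C₁ * G * L * _
          rw [mul_comm (2 : ℝ), Real.rpow_mul (by positivity), Real.rpow_two]
          ring
  exact ⟨hnorm.trans (by gcongr; linarith), hsup.trans (by gcongr; linarith)⟩

end ResonantPoints

section Exponents

variable {d l : ℕ} {V : Submodule ℝ (Fin l → ℝ)} {T : Set (Fin l → ℤ)} {A L Ltilde μ : ℝ}

lemma diam_image_intComb_le (ω : Fin l → EuclideanSpace ℝ (Fin d)) (hA : 0 ≤ A)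
    (hLt : 1 ≤ Ltilde) (hμ : 0 ≤ μ) (hTV : ∀ m ∈ T, intCast m ∈ V)
    (hT : ∀ m ∈ T, ∀ m' ∈ T, ‖intComb ω (m - m')‖ ≤ A * Ltilde ^ μ) :
    diam (intComb ω '' T) ≤ A * Ltilde ^ ((Module.finrank ℝ V : ℝ) * μ) := by
  rcases (Module.finrank ℝ V).eq_zero_or_pos with hV | hV
  · have hT_subsingleton : T.Subsingleton := by
      intro m hm m' hm'
      have hbot := Submodule.finrank_eq_zero.mp hV
      have hzero {n : Fin l → ℤ} (hn : n ∈ T) : intCast n = 0 := by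
        simpa only [hbot, Submodule.mem_bot] using hTV n hn
      exact intCast_injective ((hzero hm).trans (hzero hm').symm)
    rw [diam_subsingleton (hT_subsingleton.image _)]
    positivity
  · refine diam_le_of_forall_dist_le (by positivity) ?_
    rintro _ ⟨m, hm, rfl⟩ _ ⟨m', hm', rfl⟩
    rw [dist_eq_norm, ← intComb_sub]
    refine (hT m hm m' hm').trans ?_
    gcongr
    exact le_mul_of_one_le_left hμ (mod_cast hV)

lemma finite_and_ncard_le_of_supAbs_le_rpow (hA : 0 ≤ A) (hL : 1 ≤ L) (hLt : 1 ≤ Ltilde)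
    (hμ : 0 ≤ μ) (hV : Module.finrank ℝ V ≤ d) (hTV : ∀ m ∈ T, intCast m ∈ V)
    (hT : ∀ m ∈ T, supAbs m ≤ A * L * Ltilde ^ (2 * μ)) :
    T.Finite ∧ (T.ncard : ℝ) ≤ (2 * A + 1) ^ d * L ^ Module.finrank ℝ V *
      Ltilde ^ (((Module.finrank ℝ V ^ 2 + 1 : ℕ) : ℝ) * μ) := by
  obtain ⟨hfinite, hcard⟩ := finite_and_ncard_le_of_supAbs_le (by positivity) hTV hT
  refine ⟨hfinite, hcard.trans ?_⟩
  set s := Module.finrank ℝ V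
  have hLLt : 1 ≤ L * Ltilde ^ (2 * μ) :=
    one_le_mul_of_one_le_of_one_le hL (Real.one_le_rpow hLt (by positivity))
  have hexp : 2 * μ * s ≤ ((s ^ 2 + 1 : ℕ) : ℝ) * μ := by
    push_cast
    nlinarith [mul_nonneg hμ (sq_nonneg ((s : ℝ) - 1))]
  calc (2 * (A * L * Ltilde ^ (2 * μ)) + 1) ^ s
      ≤ ((2 * A + 1) * (L * Ltilde ^ (2 * μ))) ^ s := by
        gcongr
        linarith
    _ = (2 * A + 1) ^ s * L ^ s * Ltilde ^ (2 * μ * s) := by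
        rw [mul_pow, mul_pow, ← Real.rpow_mul_natCast (by positivity), ← mul_assoc]
    _ ≤ (2 * A + 1) ^ d * L ^ s * Ltilde ^ (((s ^ 2 + 1 : ℕ) : ℝ) * μ) := by
        gcongr
        linarith

end Exponents

theorem gamma_res_bounds_general (d l : ℕ) (hd : 0 < d) (hl : d ≤ l)
    (B₀ μhat : ℝ) (hB₀ : 0 < B₀) (hμ : 0 ≤ μhat) :
    ∃ C : ℝ, 0 < C ∧
      ∀ ω : Fin l → EuclideanSpace ℝ (Fin d),
        (∀ j i, ω j i ∈ Set.Icc (-(1 : ℝ) / 2) (1 / 2)) →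
        SDC d l ω B₀ μhat →
        ∀ (ρ L Ltilde : ℝ) (ξ : EuclideanSpace ℝ (Fin d)),
          1 ≤ L → 1 ≤ Ltilde →
          |‖ξ‖ ^ 2 - ρ ^ 2| ≤ L →
          ∀ s : ℕ,
            s = Module.finrank ℝ
                  (Submodule.span ℝ (intCast '' Ups ω ρ L Ltilde ξ)) →
            s ≤ d →
            (Metric.diam
                ((fun m => intComb ω m) ''
                  (GammaZ ω ρ L Ltilde ξ ∩ Res ω ρ L ξ)) ≤
              C * L * Ltilde ^ ((s : ℝ) * (μhat + d + 1))) ∧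
            ((GammaZ ω ρ L Ltilde ξ ∩ Res ω ρ L ξ).Finite ∧
              ((GammaZ ω ρ L Ltilde ξ ∩ Res ω ρ L ξ).ncard : ℝ) ≤
                C * L ^ s * Ltilde ^ (((s ^ 2 + 1 : ℕ) : ℝ) * (μhat + d + 1))) ∧
            (∀ m ∈ GammaZ ω ρ L Ltilde ξ ∩ Res ω ρ L ξ,
              ∀ m' ∈ GammaZ ω ρ L Ltilde ξ ∩ Res ω ρ L ξ,
                supAbs (m - m') ≤
                  C * L * Ltilde ^ (((s + 2 : ℕ) : ℝ) * (μhat + d + 1))) := by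
  obtain ⟨A, hA, hbound⟩ := exists_forall_norm_intComb_sub_le_and_supAbs_sub_le hd hl hB₀ hμ
  have hAC : A ≤ (2 * A + 1) ^ d := by
    linarith [le_self_pow₀ (by linarith : 1 ≤ 2 * A + 1) hd.ne']
  refine ⟨(2 * A + 1) ^ d, by positivity, ?_⟩
  rintro ω hω hS ρ L Ltilde ξ hL hLt hξ s rfl hs
  have hω_norm (j : Fin l) : ‖ω j‖ ≤ d := norm_le_of_forall_abs_le_one (ω j) fun i =>
    abs_le.mpr ⟨by linarith [(hω j i).1], by linarith [(hω j i).2]⟩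
  have hT := hbound ω hω_norm hS ρ L Ltilde hL hLt ξ hξ hs
  have hzero : 0 ∈ GammaZ ω ρ L Ltilde ξ ∩ Res ω ρ L ξ :=
    ⟨zero_mem_gammaZ, zero_mem_res hξ⟩
  have hμ_nonneg : 0 ≤ μhat + d + 1 := by positivity
  refine ⟨?_, ?_, fun m hm m' hm' => (hT m hm m' hm').2.trans ?_⟩
  · refine (diam_image_intComb_le (V := upsSpan ω ρ L Ltilde ξ) ω (by positivity) hLt
      hμ_nonneg (fun m hm => hm.1) fun m hm m' hm' => (hT m hm m' hm').1).trans ?_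
    gcongr
  · exact finite_and_ncard_le_of_supAbs_le_rpow hA hL hLt hμ_nonneg hs (fun m hm => hm.1)
      fun m hm => by simpa only [sub_zero] using (hT m hm 0 hzero).2
  · gcongr
    push_cast
    linarith

/-- Under the SDC (with `B₀ ∈ (0,1]`, `μhat > 0`, `μ := μhat+d+1`)
there is `C = C(d,l,μhat,B₀)` such that for all `ρ > 0`, `L, L̃ ≥ 1`, and `ξ` with
`|‖ξ‖² − ρ²| ≤ L` and `s := Rank Υ^ℤ_{L,L̃}(ξ) ≤ d`:
(i) the Euclidean diameter of `{mω⃗ : m ∈ Γ^ℤ(ξ) ∩ ℛ(L,ξ)}` is at most `C·L·L̃^{sμ}`;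
(ii) `#(Γ^ℤ(ξ) ∩ ℛ(L,ξ)) ≤ C·L^s·L̃^{(s²+1)μ}`;
(iii) the ℓ∞ diameter of `Γ^ℤ(ξ) ∩ ℛ(L,ξ)` is at most `C·L·L̃^{(s+2)μ}`. -/
theorem gamma_res_bounds (d l : ℕ) (hd : 2 ≤ d) (hl : d < l)
    (B₀ μhat : ℝ) (hB₀ : 0 < B₀) (hB₁ : B₀ ≤ 1) (hμ : 0 < μhat) :
    ∃ C : ℝ, 0 < C ∧
      ∀ ω : Fin l → EuclideanSpace ℝ (Fin d),
        (∀ j i, ω j i ∈ Set.Icc (-(1 : ℝ)/2) (1/2)) →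
        SDC d l ω B₀ μhat →
        ∀ (ρ L Ltilde : ℝ) (ξ : EuclideanSpace ℝ (Fin d)),
          0 < ρ → 1 ≤ L → 1 ≤ Ltilde →
          |‖ξ‖ ^ 2 - ρ ^ 2| ≤ L →
          ∀ s : ℕ,
            s = Module.finrank ℝ
                  (Submodule.span ℝ (intCast '' Ups ω ρ L Ltilde ξ)) →
            s ≤ d →
            (Metric.diam
                ((fun m => intComb ω m) ''
                  (GammaZ ω ρ L Ltilde ξ ∩ Res ω ρ L ξ)) ≤
              C * L * Ltilde ^ ((s : ℝ) * (μhat + d + 1))) ∧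
            ((GammaZ ω ρ L Ltilde ξ ∩ Res ω ρ L ξ).Finite ∧
              ((GammaZ ω ρ L Ltilde ξ ∩ Res ω ρ L ξ).ncard : ℝ) ≤
                C * L ^ s * Ltilde ^ (((s ^ 2 + 1 : ℕ) : ℝ) * (μhat + d + 1))) ∧
            (∀ m ∈ GammaZ ω ρ L Ltilde ξ ∩ Res ω ρ L ξ,
              ∀ m' ∈ GammaZ ω ρ L Ltilde ξ ∩ Res ω ρ L ξ,
                supAbs (m - m') ≤
                  C * L * Ltilde ^ (((s + 2 : ℕ) : ℝ) * (μhat + d + 1))) := by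
  obtain ⟨C, hC, h⟩ := gamma_res_bounds_general d l (by omega) hl.le B₀ μhat hB₀ hμ.le
  exact ⟨C, hC, fun ω hω hS ρ L Ltilde ξ _ => h ω hω hS ρ L Ltilde ξ⟩

end
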